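/- Boundary quadruple for divergence free fields (Theorem 'generalquadruple'): suppose b is divergence free with respect to B, B is finite with harmonic partition functions ψ_q, and b = ∂h + v with h ∈ 𝒞 and v orthogonal to ∂(𝒞) is the Hodge decomposition of b. Partition B as B̊ := {q : n_B b(q) = 0}, B̌ := {q : n_B b(q) < 0}, B̂ := {q : n_B b(q) > 0}, and let H̃± := ℝ^{B̊} ⊕ ℝ^{B̌} ⊕ ℝ^{B̂} ⊕ ker ∂^⊥ with inner product Σ_{B̊} F₁F₂ + Σ_{B̌} F₁F₂·|n_B b| + Σ_{B̂} F₁F₂·|n_B b| + ⟨·,·⟩_{H₀}. Let H₋ be the orthogonal complement in H̃± of the span of ((1/√2)𝟏, 𝟏, 0, −(1/√2)U^{-1}v) and H₊ the orthogonal complement of the span of ((1/√2)𝟏, 0, −𝟏, −(1/√2)U^{-1}v), with orthogonal projections P₋, P₊. Assume every f ∈ D(∂_B^⊥) admits a key representation f = j g + U^{-1}(∂u) + w with g, u ∈ 𝒞, ∂u ∈ D(∂_B*), w ∈ ker ∂^⊥ and z := ∂_B^⊥ f − U^{-1}(∂g) ∈ ker ∂^⊥, and for such a representation set G₋f := P₋((1/√2)(g+n_B(fb))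 on B̊, (du)_B/|n_B b| on B̌, n_B(fb)/|n_B b| on B̂, (1/√2)(w+z)) and G₊f := P₊((1/√2)(g−n_B(fb)) on B̊, n_B(fb)/|n_B b| on B̌, (du)_B/|n_B b| on B̂, (1/√2)(w−z)). Then: (a) G₋f and G₊f do not depend on the chosen key representation; (b) for all f₁, f₂ ∈ D(∂_B^⊥): ⟨∂_B^⊥ f₁, f₂⟩_{H₀} + ⟨f₁, ∂_B^⊥ f₂⟩_{H₀} = ⟨G₋f₁, G₋f₂⟩_{H̃±} − ⟨G₊f₁, G₊f₂⟩_{H̃±}; (c) the map f ↦ (G₋f, G₊f) from D(∂_B^⊥) to H₋ × H₊ is surjective. In other words, (H₋, H₊, G₋, G₊) is a boundary quadruple for the operator j f ↦ −U^{-1}(∂f) on j(𝒞_B). -/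

import Mathlib

open RealInnerProductSpace ContinuousMap

set_option synthInstance.maxHeartbeats 1000000
set_option maxHeartbeats 1000000

namespace Stmt13

variable {X : Type*} [MetricSpace X] [CompactSpace X]
variable {H : Type*} [NormedAddCommGroup H] [InnerProductSpace ℝ H] [CompleteSpace H]
variable {H₀ : Type*} [NormedAddCommGroup H₀] [InnerProductSpace ℝ H₀] [CompleteSpace H₀]
variable {ι : Type*} [Fintype ι]

/-- elements of `𝒞` vanishing on `B`, i.e. membership in `𝒞_B` -/
def Vanish (𝒞 : Subalgebra ℝ C(X, ℝ)) (B : Set X) (f : 𝒞) : Prop :=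
  ∀ x ∈ B, (f : C(X, ℝ)) x = 0

/-- `d` is the value of the adjoint `∂_B^*` at `v ∈ H` -/
def AdjRel (𝒞 : Subalgebra ℝ C(X, ℝ)) (B : Set X) (par : 𝒞 →ₗ[ℝ] H)
    (j : 𝒞 →ₗ[ℝ] H₀) (v : H) (d : H₀) : Prop :=
  ∀ φ : 𝒞, Vanish 𝒞 B φ → ⟪v, par φ⟫ = ⟪d, j φ⟫

/-- membership in `ker ∂^⊥` -/
def KerDperp (𝒞 : Subalgebra ℝ C(X, ℝ)) (par : 𝒞 →ₗ[ℝ] H) (U : H₀ ≃ₗᵢ[ℝ] H) (w : H₀) : Prop :=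
  ∀ φ : 𝒞, ⟪U w, par φ⟫ = 0

/-- a key representation of `f ∈ D(∂_B^⊥)`, recording the adjoint values `d = ∂_B^*(U f)`
and `eu = ∂_B^*(∂u)` -/
def KeyRep (𝒞 : Subalgebra ℝ C(X, ℝ)) (B : Set X) (par : 𝒞 →ₗ[ℝ] H)
    (j : 𝒞 →ₗ[ℝ] H₀) (U : H₀ ≃ₗᵢ[ℝ] H) (f d : H₀) (g u : 𝒞) (eu w : H₀) : Prop :=
  AdjRel 𝒞 B par j (U f) d ∧
  AdjRel 𝒞 B par j (par u) eu ∧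
  KerDperp 𝒞 par U w ∧
  f = j g + U.symm (par u) + w ∧
  KerDperp 𝒞 par U (-d - U.symm (par g))

/-- the normal part `n_B b` at the boundary point indexed by `i` -/
noncomputable def nb (𝒞 : Subalgebra ℝ C(X, ℝ)) (par : 𝒞 →ₗ[ℝ] H) (ψ : ι → 𝒞) (b : H)
    (i : ι) : ℝ :=
  ⟪b, par (ψ i)⟫

/-- the inner product of `H̃± = ℝ^{B̊} ⊕ ℝ^{B̌} ⊕ ℝ^{B̂} ⊕ ker ∂^⊥` (the three boundary pieces
are encoded as one function on the index set; on `B̌ ∪ B̂` the coordinates are weighted by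
`|n_B b|`) -/
noncomputable def ipW (𝒞 : Subalgebra ℝ C(X, ℝ)) (par : 𝒞 →ₗ[ℝ] H) (ψ : ι → 𝒞) (b : H)
    (p₁ p₂ : (ι → ℝ) × H₀) : ℝ :=
  (∑ i, (if nb 𝒞 par ψ b i = 0 then 1 else |nb 𝒞 par ψ b i|) * (p₁.1 i * p₂.1 i)) +
    ⟪p₁.2, p₂.2⟫

/-- the orthogonal projection onto the orthogonal complement of the span of `e` with respect to
the inner product `ip` -/
noncomputable def projWith (ip : ((ι → ℝ) × H₀) → ((ι → ℝ) × H₀) → ℝ)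
    (e x : (ι → ℝ) × H₀) : (ι → ℝ) × H₀ :=
  x - (ip x e / ip e e) • e

/-- the normal part `n_B(fb)` at the boundary point indexed by `i`, where `d = ∂_B^*(U f)` -/
noncomputable def nfb (𝒞 : Subalgebra ℝ C(X, ℝ)) (par : 𝒞 →ₗ[ℝ] H) (j : 𝒞 →ₗ[ℝ] H₀)
    (U : H₀ ≃ₗᵢ[ℝ] H) (ψ : ι → 𝒞) (f d : H₀) (i : ι) : ℝ :=
  ⟪U f, par (ψ i)⟫ + ⟪-d, j (ψ i)⟫

/-- the normal derivative `(du)_B` at the boundary point indexed by `i`, where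
`eu = ∂_B^*(∂u)` -/
noncomputable def duB (𝒞 : Subalgebra ℝ C(X, ℝ)) (par : 𝒞 →ₗ[ℝ] H) (j : 𝒞 →ₗ[ℝ] H₀)
    (ψ : ι → 𝒞) (u : 𝒞) (eu : H₀) (i : ι) : ℝ :=
  ⟪par u, par (ψ i)⟫ - ⟪eu, j (ψ i)⟫

/-- the vector `((1/√2)𝟏, 𝟏, 0, −(1/√2)U⁻¹v)` spanning the complement of `H₋` -/
noncomputable def eMinus (𝒞 : Subalgebra ℝ C(X, ℝ)) (par : 𝒞 →ₗ[ℝ] H) (ψ : ι → 𝒞) (b : H)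
    (U : H₀ ≃ₗᵢ[ℝ] H) (v : H) : (ι → ℝ) × H₀ :=
  (fun i => if nb 𝒞 par ψ b i = 0 then (Real.sqrt 2)⁻¹
    else if nb 𝒞 par ψ b i < 0 then 1 else 0,
   -((Real.sqrt 2)⁻¹ • U.symm v))

/-- the vector `((1/√2)𝟏, 0, −𝟏, −(1/√2)U⁻¹v)` spanning the complement of `H₊` -/
noncomputable def ePlus (𝒞 : Subalgebra ℝ C(X, ℝ)) (par : 𝒞 →ₗ[ℝ] H) (ψ : ι → 𝒞) (b : H)
    (U : H₀ ≃ₗᵢ[ℝ] H) (v : H) : (ι → ℝ) × H₀ :=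
  (fun i => if nb 𝒞 par ψ b i = 0 then (Real.sqrt 2)⁻¹
    else if nb 𝒞 par ψ b i < 0 then 0 else -1,
   -((Real.sqrt 2)⁻¹ • U.symm v))

/-- `G₋f := P₋((1/√2)(g+n_B(fb))` on `B̊`, `(du)_B/|n_B b|` on `B̌`, `n_B(fb)/|n_B b|` on `B̂`,
`(1/√2)(w+z))` -/
noncomputable def Gminus (𝒞 : Subalgebra ℝ C(X, ℝ)) (par : 𝒞 →ₗ[ℝ] H) (j : 𝒞 →ₗ[ℝ] H₀)
    (U : H₀ ≃ₗᵢ[ℝ] H) (q : ι → X) (ψ : ι → 𝒞) (b : H) (v : H)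
    (f d : H₀) (g u : 𝒞) (eu w : H₀) : (ι → ℝ) × H₀ :=
  projWith (ipW 𝒞 par ψ b) (eMinus 𝒞 par ψ b U v)
    ((fun i => if nb 𝒞 par ψ b i = 0 then
        (Real.sqrt 2)⁻¹ * ((g : C(X, ℝ)) (q i) + nfb 𝒞 par j U ψ f d i)
      else if nb 𝒞 par ψ b i < 0 then duB 𝒞 par j ψ u eu i / |nb 𝒞 par ψ b i|
      else nfb 𝒞 par j U ψ f d i / |nb 𝒞 par ψ b i|),
     (Real.sqrt 2)⁻¹ • (w + (-d - U.symm (par g))))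

/-- `G₊f := P₊((1/√2)(g−n_B(fb))` on `B̊`, `n_B(fb)/|n_B b|` on `B̌`, `(du)_B/|n_B b|` on `B̂`,
`(1/√2)(w−z))` -/
noncomputable def Gplus (𝒞 : Subalgebra ℝ C(X, ℝ)) (par : 𝒞 →ₗ[ℝ] H) (j : 𝒞 →ₗ[ℝ] H₀)
    (U : H₀ ≃ₗᵢ[ℝ] H) (q : ι → X) (ψ : ι → 𝒞) (b : H) (v : H)
    (f d : H₀) (g u : 𝒞) (eu w : H₀) : (ι → ℝ) × H₀ :=
  projWith (ipW 𝒞 par ψ b) (ePlus 𝒞 par ψ b U v)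
    ((fun i => if nb 𝒞 par ψ b i = 0 then
        (Real.sqrt 2)⁻¹ * ((g : C(X, ℝ)) (q i) - nfb 𝒞 par j U ψ f d i)
      else if nb 𝒞 par ψ b i < 0 then nfb 𝒞 par j U ψ f d i / |nb 𝒞 par ψ b i|
      else duB 𝒞 par j ψ u eu i / |nb 𝒞 par ψ b i|),
     (Real.sqrt 2)⁻¹ • (w - (-d - U.symm (par g))))

/-!
A key representation `f = j g + U⁻¹(∂u) + w` with `z = ∂_B^⊥ f − U⁻¹(∂g)` is encoded by the data
`(γ, δ, w, z)`, where `γ = g|_B` and `δ = (du)_B`; the Gauss–Green formula gives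
`n_B(fb) = γ n + δ` with `n = n_B b`. So `G∓ f = P∓ x∓` for vectors `x∓` that are linear in the
data, and the direction removed by `P∓` is the vector `x∓` of the single datum
`(1, −n, −U⁻¹v, 0)`, that of the key representation `0 = j 1 − U⁻¹(∂h) − U⁻¹v` of `0`.
* Since `∂` annihilates only the constants, two key representations of `f` differ by a multiple of
  that datum, which gives (a).
* `⟨x₋, x₋'⟩ − ⟨x₊, x₊'⟩` is an indefinite form on the data. By Gauss–Green it equals
  `⟨∂_B^⊥ f, f'⟩ + ⟨f, ∂_B^⊥ f'⟩`. The datum above is isotropic for it, and orthogonal to all key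
  representations, so the corrections made by `P₋` and `P₊` cancel. This gives (b).
* Data and pairs `(x₋, x₊)` correspond bijectively, and when `x₋ ∈ H₋` and `x₊ ∈ H₊` the data are
  orthogonal to the datum above, that is, `∑ δ = ⟨z, j 1⟩`: exactly the compatibility condition
  for the Neumann problem which produces `u`. This gives (c).
-/

section Projection

omit [Fintype ι]

variable {E : Type*} [NormedAddCommGroup E] [InnerProductSpace ℝ E]
  (S : LinearMap.BilinForm ℝ ((ι → ℝ) × E)) {e x y : (ι → ℝ) × E}

theorem projWith_eq_self (h : S x e = 0) : projWith (fun p r => S p r) e x = x := by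
  simp [projWith, h]

theorem projWith_add_smul (he : S e e = 0 → e = 0) (c : ℝ) :
    projWith (fun p r => S p r) e (x + c • e) = projWith (fun p r => S p r) e x := by
  rcases eq_or_ne e 0 with rfl | hne
  · simp
  · have hee : S e e ≠ 0 := mt he hne
    simp only [projWith, map_add, map_smul, LinearMap.add_apply, LinearMap.smul_apply,
      smul_eq_mul, add_div, mul_div_cancel_right₀ c hee]
    module

theorem apply_projWith_projWith (hS : S.IsSymm) :
    S (projWith (fun p r => S p r) e x) (projWith (fun p r => S p r) e y) =
      S x y - S x e * S y e / S e e := by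
  have hey : S e y = S y e := hS.eq e y
  simp only [projWith, map_sub, map_smul, LinearMap.sub_apply, LinearMap.smul_apply,
    smul_eq_mul, hey]
  rcases eq_or_ne (S e e) 0 with hee | hee
  · simp [hee]
  · field_simp
    ring

end Projection

section BoundaryData

variable {E : Type*} [NormedAddCommGroup E] [InnerProductSpace ℝ E] (n : ι → ℝ)

/-- The weighted inner product `ipW` as a bilinear form, for an arbitrary boundary flux `n` in
place of `n_B b`. -/
noncomputable def boundaryForm : LinearMap.BilinForm ℝ ((ι → ℝ) × E) :=
  LinearMap.mk₂ ℝ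
    (fun x y => (∑ i, (if n i = 0 then 1 else |n i|) * (x.1 i * y.1 i)) + ⟪x.2, y.2⟫)
    (fun x x' y => by
      simp only [Prod.fst_add, Prod.snd_add, Pi.add_apply, inner_add_left, add_mul, mul_add,
        Finset.sum_add_distrib]
      ring)
    (fun c x y => by
      simp only [Prod.smul_fst, Prod.smul_snd, Pi.smul_apply, smul_eq_mul, real_inner_smul_left,
        mul_add, Finset.mul_sum, mul_assoc, mul_left_comm c])
    (fun x y y' => by
      simp only [Prod.fst_add, Prod.snd_add, Pi.add_apply, inner_add_right, mul_add,
        Finset.sum_add_distrib]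
      ring)
    (fun c x y => by
      simp only [Prod.smul_fst, Prod.smul_snd, Pi.smul_apply, smul_eq_mul, real_inner_smul_right,
        mul_add, Finset.mul_sum, mul_left_comm c])

/-- Quadruples `(γ, δ, w, z)` recording, for a key representation `f = j g + U⁻¹(∂u) + w`, the
boundary values `γ = g|_B`, the normal derivative `δ = (du)_B`, and the elements `w` and
`z = ∂_B^⊥ f − U⁻¹(∂g)` of `ker ∂^⊥`. -/
abbrev BoundaryDatum (κ E : Type*) := (κ → ℝ) × (κ → ℝ) × E × E

/-- The vector projected in the definition of `G₋`, with `n_B(fb)` expressed as `γn + δ`. -/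
noncomputable def minusVec : BoundaryDatum ι E →ₗ[ℝ] (ι → ℝ) × E where
  toFun := fun (γ, δ, w, z) =>
    (fun i => if n i = 0 then (Real.sqrt 2)⁻¹ * (γ i + (γ i * n i + δ i))
      else if n i < 0 then δ i / |n i| else (γ i * n i + δ i) / |n i|,
    (Real.sqrt 2)⁻¹ • (w + z))
  map_add' D D' := by
    refine Prod.ext (funext fun i => ?_) ?_ <;>
      simp only [Prod.fst_add, Prod.snd_add, Pi.add_apply]
    · split_ifs <;> ring
    · module
  map_smul' c D := by
    refine Prod.ext (funext fun i => ?_) ?_ <;>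
      simp only [Prod.smul_fst, Prod.smul_snd, Pi.smul_apply, smul_eq_mul, RingHom.id_apply]
    · split_ifs <;> ring
    · module

/-- The vector projected in the definition of `G₊`, with `n_B(fb)` expressed as `γn + δ`. -/
noncomputable def plusVec : BoundaryDatum ι E →ₗ[ℝ] (ι → ℝ) × E where
  toFun := fun (γ, δ, w, z) =>
    (fun i => if n i = 0 then (Real.sqrt 2)⁻¹ * (γ i - (γ i * n i + δ i))
      else if n i < 0 then (γ i * n i + δ i) / |n i| else δ i / |n i|,
    (Real.sqrt 2)⁻¹ • (w - z))
  map_add' D D' := by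
    refine Prod.ext (funext fun i => ?_) ?_ <;>
      simp only [Prod.fst_add, Prod.snd_add, Pi.add_apply]
    · split_ifs <;> ring
    · module
  map_smul' c D := by
    refine Prod.ext (funext fun i => ?_) ?_ <;>
      simp only [Prod.smul_fst, Prod.smul_snd, Pi.smul_apply, smul_eq_mul, RingHom.id_apply]
    · split_ifs <;> ring
    · module

/-- The indefinite form on boundary data in which the right-hand side of the integration by parts
identity for `∂_B^⊥` is expressed. -/
noncomputable def crossForm (D D' : BoundaryDatum ι E) : ℝ :=
  (∑ i, (D.1 i * D'.1 i * n i + D.1 i * D'.2.1 i + D'.1 i * D.2.1 i)) +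
    (⟪D.2.2.1, D'.2.2.2⟫ + ⟪D.2.2.2, D'.2.2.1⟫)

/-- The datum of the key representation `0 = j 1 − U⁻¹(∂h) − U⁻¹v` of `0`, where `a` stands for
`U⁻¹v`. -/
def gaugeDatum (a : E) : BoundaryDatum ι E :=
  (1, -n, -a, 0)

/-- The boundary datum with prescribed `minusVec` and `plusVec`. -/
noncomputable def datumOfVecs (y y' : (ι → ℝ) × E) : BoundaryDatum ι E :=
  (fun i => if n i = 0 then (Real.sqrt 2)⁻¹ * (y.1 i + y'.1 i) else y.1 i - y'.1 i,
    fun i => if n i = 0 then (Real.sqrt 2)⁻¹ * (y.1 i - y'.1 i)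
      else if n i < 0 then |n i| * y.1 i else |n i| * y'.1 i,
    (Real.sqrt 2)⁻¹ • (y.2 + y'.2), (Real.sqrt 2)⁻¹ • (y.2 - y'.2))

/-- `P₋` applied to `minusVec`: the map `G₋` in terms of boundary data. -/
noncomputable def minusTrace (a : E) (D : BoundaryDatum ι E) : (ι → ℝ) × E :=
  projWith (fun x y => boundaryForm n x y) (minusVec n (gaugeDatum n a)) (minusVec n D)

/-- `P₊` applied to `plusVec`: the map `G₊` in terms of boundary data. -/
noncomputable def plusTrace (a : E) (D : BoundaryDatum ι E) : (ι → ℝ) × E :=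
  projWith (fun x y => boundaryForm n x y) (plusVec n (gaugeDatum n a)) (plusVec n D)

variable {n}

theorem boundaryForm_apply (x y : (ι → ℝ) × E) :
    boundaryForm n x y =
      (∑ i, (if n i = 0 then 1 else |n i|) * (x.1 i * y.1 i)) + ⟪x.2, y.2⟫ :=
  rfl

theorem boundaryForm_isSymm : (boundaryForm n : LinearMap.BilinForm ℝ ((ι → ℝ) × E)).IsSymm :=
  ⟨fun x y => by simp [boundaryForm_apply, mul_comm, real_inner_comm]⟩

theorem eq_zero_of_boundaryForm_self_eq_zero {x : (ι → ℝ) × E} (h : boundaryForm n x x = 0) :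
    x = 0 := by
  have weight_pos (i : ι) : 0 < if n i = 0 then 1 else |n i| := by
    split_ifs with hi
    exacts [one_pos, abs_pos.mpr hi]
  have term_nonneg : ∀ i ∈ Finset.univ,
      0 ≤ (if n i = 0 then 1 else |n i|) * (x.1 i * x.1 i) :=
    fun i _ => mul_nonneg (weight_pos i).le (mul_self_nonneg _)
  obtain ⟨hsum, hinner⟩ := (add_eq_zero_iff_of_nonneg (Finset.sum_nonneg term_nonneg)
    real_inner_self_nonneg).1 ((boundaryForm_apply x x).symm.trans h)
  refine Prod.ext (funext fun i => ?_) (inner_self_eq_zero.1 hinner)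
  have hi := (Finset.sum_eq_zero_iff_of_nonneg term_nonneg).1 hsum i (Finset.mem_univ i)
  exact mul_self_eq_zero.1 ((mul_eq_zero.1 hi).resolve_left (weight_pos i).ne')

theorem inv_sqrt_two_mul_self : (Real.sqrt 2)⁻¹ * (Real.sqrt 2)⁻¹ = 1 / 2 := by
  rw [← mul_inv, Real.mul_self_sqrt zero_le_two, one_div]

theorem boundaryForm_minusVec_sub_boundaryForm_plusVec (D D' : BoundaryDatum ι E) :
    boundaryForm n (minusVec n D) (minusVec n D') - boundaryForm n (plusVec n D) (plusVec n D') =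
      crossForm n D D' := by
  obtain ⟨γ, δ, w, z⟩ := D
  obtain ⟨γ', δ', w', z'⟩ := D'
  simp only [boundaryForm_apply, crossForm, minusVec, plusVec, LinearMap.coe_mk, AddHom.coe_mk]
  rw [add_sub_add_comm, ← Finset.sum_sub_distrib]
  congr 1
  · refine Finset.sum_congr rfl fun i _ => ?_
    split_ifs with hzero hneg
    · rw [hzero]
      linear_combination (2 * (γ i * δ' i + γ' i * δ i)) * inv_sqrt_two_mul_self
    · rw [abs_of_neg hneg]
      field_simp
      ring
    · rw [abs_of_nonneg (not_lt.1 hneg)]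
      field_simp
      ring
  · simp only [real_inner_smul_left, real_inner_smul_right, inner_add_left, inner_add_right,
      inner_sub_left, inner_sub_right]
    linear_combination (2 * (⟪w, z'⟫ + ⟪z, w'⟫)) * inv_sqrt_two_mul_self

theorem crossForm_gaugeDatum (a : E) (γ δ : ι → ℝ) (w z : E) :
    crossForm n (γ, δ, w, z) (gaugeDatum n a) = ∑ i, δ i - ⟪z, a⟫ := by
  simp [crossForm, gaugeDatum, sub_eq_add_neg]

omit [Fintype ι] in
theorem minusVec_datumOfVecs (y y' : (ι → ℝ) × E) :
    minusVec n (datumOfVecs n y y') = y := by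
  refine Prod.ext (funext fun i => ?_) ?_ <;>
    simp only [minusVec, datumOfVecs, LinearMap.coe_mk, AddHom.coe_mk]
  · split_ifs with hzero hneg
    · rw [hzero]
      linear_combination (2 * y.1 i) * inv_sqrt_two_mul_self
    · exact mul_div_cancel_left₀ _ (abs_pos.2 hzero).ne'
    · rw [abs_of_nonneg (not_lt.1 hneg)]
      field_simp
      ring
  · rw [← smul_add, smul_smul, inv_sqrt_two_mul_self]
    module

omit [Fintype ι] in
theorem plusVec_datumOfVecs (y y' : (ι → ℝ) × E) :
    plusVec n (datumOfVecs n y y') = y' := by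
  refine Prod.ext (funext fun i => ?_) ?_ <;>
    simp only [plusVec, datumOfVecs, LinearMap.coe_mk, AddHom.coe_mk]
  · split_ifs with hzero hneg
    · rw [hzero]
      linear_combination (2 * y'.1 i) * inv_sqrt_two_mul_self
    · rw [abs_of_neg hneg]
      field_simp
      ring
    · exact mul_div_cancel_left₀ _ (abs_pos.2 hzero).ne'
  · rw [← smul_sub, smul_smul, inv_sqrt_two_mul_self]
    module

theorem minusTrace_add_smul_gaugeDatum (a : E) (D : BoundaryDatum ι E) (c : ℝ) :
    minusTrace n a (D + c • gaugeDatum n a) = minusTrace n a D := by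
  rw [minusTrace, map_add, map_smul]
  exact projWith_add_smul _ eq_zero_of_boundaryForm_self_eq_zero c

theorem plusTrace_add_smul_gaugeDatum (a : E) (D : BoundaryDatum ι E) (c : ℝ) :
    plusTrace n a (D + c • gaugeDatum n a) = plusTrace n a D := by
  rw [plusTrace, map_add, map_smul]
  exact projWith_add_smul _ eq_zero_of_boundaryForm_self_eq_zero c

theorem boundaryForm_minusTrace_sub_boundaryForm_plusTrace (hn : ∑ i, n i = 0) (a : E)
    {D D' : BoundaryDatum ι E} (hD : crossForm n D (gaugeDatum n a) = 0)
    (hD' : crossForm n D' (gaugeDatum n a) = 0) :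
    boundaryForm n (minusTrace n a D) (minusTrace n a D') -
      boundaryForm n (plusTrace n a D) (plusTrace n a D') = crossForm n D D' := by
  have hgauge : crossForm n (gaugeDatum n a) (gaugeDatum n a) = 0 := by
    refine (crossForm_gaugeDatum a _ _ _ _).trans ?_
    simp [hn]
  rw [← boundaryForm_minusVec_sub_boundaryForm_plusVec, sub_eq_zero] at hgauge hD hD'
  rw [minusTrace, minusTrace, plusTrace, plusTrace,
    apply_projWith_projWith _ boundaryForm_isSymm, apply_projWith_projWith _ boundaryForm_isSymm,
    hgauge, hD, hD', sub_sub_sub_cancel_right, boundaryForm_minusVec_sub_boundaryForm_plusVec]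

end BoundaryData

section BoundaryPartition

omit [CompactSpace X]

variable {𝒞 : Subalgebra ℝ C(X, ℝ)} {q : ι → X} {ψ : ι → 𝒞}

omit [Fintype ι] in
theorem vanish_range_iff {φ : 𝒞} :
    Vanish 𝒞 (Set.range q) φ ↔ ∀ i, (φ : C(X, ℝ)) (q i) = 0 :=
  Set.forall_mem_range

/-- Functions `ψ i ∈ 𝒞` dual to the boundary points `q i`. -/
structure IsBoundaryPartition (𝒞 : Subalgebra ℝ C(X, ℝ)) (q : ι → X) (ψ : ι → 𝒞) : Prop where
  apply_self : ∀ i, (ψ i : C(X, ℝ)) (q i) = 1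
  apply_of_ne : ∀ i k, i ≠ k → (ψ i : C(X, ℝ)) (q k) = 0

namespace IsBoundaryPartition

theorem sum_apply_mul (hψ : IsBoundaryPartition 𝒞 q ψ) (c : ι → ℝ) (i : ι) :
    ∑ k, (ψ i : C(X, ℝ)) (q k) * c k = c i := by
  rw [Finset.sum_eq_single i (fun k _ hk => by rw [hψ.apply_of_ne i k hk.symm, zero_mul])
    (fun hi => absurd (Finset.mem_univ i) hi), hψ.apply_self, one_mul]

theorem sum_smul_apply (hψ : IsBoundaryPartition 𝒞 q ψ) (c : ι → ℝ) (k : ι) :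
    ((∑ i, c i • ψ i : 𝒞) : C(X, ℝ)) (q k) = c k := by
  simp only [AddSubmonoidClass.coe_finsetSum, ContinuousMap.sum_apply, SetLike.val_smul,
    ContinuousMap.smul_apply, smul_eq_mul]
  rw [Finset.sum_eq_single k (fun i _ hi => by rw [hψ.apply_of_ne i k hi, mul_zero])
    (fun hk => absurd (Finset.mem_univ k) hk), hψ.apply_self, mul_one]

theorem eq_sum_of_forall_vanish (hψ : IsBoundaryPartition 𝒞 q ψ) {F : 𝒞 →ₗ[ℝ] ℝ}
    (hF : ∀ φ, Vanish 𝒞 (Set.range q) φ → F φ = 0) (φ : 𝒞) :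
    F φ = ∑ i, (φ : C(X, ℝ)) (q i) * F (ψ i) := by
  have hvanish : Vanish 𝒞 (Set.range q) (φ - ∑ i, (φ : C(X, ℝ)) (q i) • ψ i) :=
    vanish_range_iff.2 fun k => sub_eq_zero.2 (hψ.sum_smul_apply (fun i => φ.1 (q i)) k).symm
  simpa only [map_sub, map_sum, map_smul, smul_eq_mul, sub_eq_zero] using hF _ hvanish

end IsBoundaryPartition

omit [CompleteSpace H] [CompleteSpace H₀]

variable {par : 𝒞 →ₗ[ℝ] H} {j : 𝒞 →ₗ[ℝ] H₀}

theorem AdjRel.inner_sub_inner {p : H} {d : H₀} (hp : AdjRel 𝒞 (Set.range q) par j p d)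
    (hψ : IsBoundaryPartition 𝒞 q ψ) (φ : 𝒞) :
    ⟪p, par φ⟫ - ⟪d, j φ⟫ =
      ∑ i, (φ : C(X, ℝ)) (q i) * (⟪p, par (ψ i)⟫ - ⟪d, j (ψ i)⟫) :=
  hψ.eq_sum_of_forall_vanish (F := innerₛₗ ℝ p ∘ₗ par - innerₛₗ ℝ d ∘ₗ j)
    (fun χ hχ => sub_eq_zero.2 (hp χ hχ)) φ

theorem AdjRel.unique {B : Set X} {p : H} {d d' : H₀}
    (hd : AdjRel 𝒞 B par j p d) (hd' : AdjRel 𝒞 B par j p d')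
    (hj : Dense (j '' {φ : 𝒞 | Vanish 𝒞 B φ})) : d = d' := by
  refine hj.eq_of_inner_left ℝ ?_
  rintro _ ⟨φ, hφ, rfl⟩
  exact (hd φ hφ).symm.trans (hd' φ hφ)

end BoundaryPartition

section DivergenceFree

omit [CompactSpace X] [CompleteSpace H] [CompleteSpace H₀]

variable {𝒞 : Subalgebra ℝ C(X, ℝ)} {q : ι → X} {ψ : ι → 𝒞} {par : 𝒞 →ₗ[ℝ] H}
  {j : 𝒞 →ₗ[ℝ] H₀} {U : H₀ ≃ₗᵢ[ℝ] H} {b : H}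

omit [Fintype ι] in
theorem KerDperp.inner_map_one {z : H₀} (hz : KerDperp 𝒞 par U z) (hU : U (j 1) = b)
    {h : 𝒞} {v : H} (hb : b = par h + v) : ⟪z, j 1⟫ = ⟪z, U.symm v⟫ := by
  rw [← U.inner_map_eq_flip, ← U.inner_map_map, hU, hb, inner_add_right, hz h, zero_add]

theorem inner_par_eq_sum_nb (hψ : IsBoundaryPartition 𝒞 q ψ)
    (hb : ∀ φ, Vanish 𝒞 (Set.range q) φ → ⟪b, par φ⟫ = 0) (φ : 𝒞) :
    ⟪b, par φ⟫ = ∑ i, (φ : C(X, ℝ)) (q i) * nb 𝒞 par ψ b i :=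
  hψ.eq_sum_of_forall_vanish (F := innerₛₗ ℝ b ∘ₗ par) hb φ

theorem sum_nb_eq_zero (hψ : IsBoundaryPartition 𝒞 q ψ)
    (hb : ∀ φ, Vanish 𝒞 (Set.range q) φ → ⟪b, par φ⟫ = 0) (hpar : par 1 = 0) :
    ∑ i, nb 𝒞 par ψ b i = 0 := by
  simpa [hpar] using (inner_par_eq_sum_nb hψ hb 1).symm

/-- The Gauss–Green formula for products `gφ` against the field `b`, whose multiples `g • b` are
written `U (j g)`. -/
def GaussGreen (𝒞 : Subalgebra ℝ C(X, ℝ)) (par : 𝒞 →ₗ[ℝ] H) (j : 𝒞 →ₗ[ℝ] H₀)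
    (U : H₀ ≃ₗᵢ[ℝ] H) (q : ι → X) (ψ : ι → 𝒞) (b : H) : Prop :=
  ∀ g φ : 𝒞, ⟪U (j g), par φ⟫ + ⟪U (j φ), par g⟫ =
    ∑ i, (g : C(X, ℝ)) (q i) * (φ : C(X, ℝ)) (q i) * nb 𝒞 par ψ b i

theorem gaussGreen_of_leibniz {act : 𝒞 →ₗ[ℝ] H →ₗ[ℝ] H}
    (hact : ∀ (f : 𝒞) (p p' : H), ⟪act f p, p'⟫ = ⟪p, act f p'⟫)
    (hpar : ∀ f g : 𝒞, par (f * g) = act f (par g) + act g (par f))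
    (hU : ∀ f : 𝒞, U (j f) = act f b) (hψ : IsBoundaryPartition 𝒞 q ψ)
    (hb : ∀ φ, Vanish 𝒞 (Set.range q) φ → ⟪b, par φ⟫ = 0) :
    GaussGreen 𝒞 par j U q ψ b := by
  intro g φ
  rw [hU, hU, hact, hact, ← inner_add_right, ← hpar, inner_par_eq_sum_nb hψ hb]
  rfl

theorem GaussGreen.inner_par_add_inner (hG : GaussGreen 𝒞 par j U q ψ b) {w : H₀}
    (hw : KerDperp 𝒞 par U w) (g u : 𝒞) (d : H₀) (φ : 𝒞) :
    ⟪U (j g + U.symm (par u) + w), par φ⟫ + ⟪-d, j φ⟫ =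
      (∑ i, (g : C(X, ℝ)) (q i) * (φ : C(X, ℝ)) (q i) * nb 𝒞 par ψ b i) +
        ⟪par u, par φ⟫ + ⟪-d - U.symm (par g), j φ⟫ := by
  have hswap : ⟪U.symm (par g), j φ⟫ = ⟪U (j φ), par g⟫ := by
    rw [real_inner_comm, ← U.inner_map_eq_flip]
  rw [← hG g φ, map_add, map_add, U.apply_symm_apply, inner_add_left, inner_add_left, hw φ,
    inner_sub_left, hswap]
  ring

end DivergenceFree

section KeyRepresentation

omit [CompactSpace X] [CompleteSpace H] [CompleteSpace H₀]

variable {𝒞 : Subalgebra ℝ C(X, ℝ)} {q : ι → X} {ψ : ι → 𝒞} {par : 𝒞 →ₗ[ℝ] H}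
  {j : 𝒞 →ₗ[ℝ] H₀} {U : H₀ ≃ₗᵢ[ℝ] H} {b : H} {f d : H₀} {g u : 𝒞} {eu w : H₀}

/-- The boundary datum of a key representation. -/
noncomputable def keyDatum (𝒞 : Subalgebra ℝ C(X, ℝ)) (par : 𝒞 →ₗ[ℝ] H) (j : 𝒞 →ₗ[ℝ] H₀)
    (U : H₀ ≃ₗᵢ[ℝ] H) (q : ι → X) (ψ : ι → 𝒞) (d : H₀) (g u : 𝒞) (eu w : H₀) :
    BoundaryDatum ι H₀ :=
  (fun i => (g : C(X, ℝ)) (q i), duB 𝒞 par j ψ u eu, w, -d - U.symm (par g))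

omit [Fintype ι] in
theorem eMinus_eq (v : H) :
    eMinus 𝒞 par ψ b U v = minusVec (nb 𝒞 par ψ b) (gaugeDatum (nb 𝒞 par ψ b) (U.symm v)) := by
  refine Prod.ext (funext fun i => ?_) ?_ <;>
    simp only [eMinus, minusVec, gaugeDatum, LinearMap.coe_mk, AddHom.coe_mk]
  · split_ifs with hzero hneg
    · simp
    · rw [abs_of_neg hneg]
      exact (div_self (neg_ne_zero.2 hzero)).symm
    · simp
  · simp

omit [Fintype ι] in
theorem ePlus_eq (v : H) :
    ePlus 𝒞 par ψ b U v = plusVec (nb 𝒞 par ψ b) (gaugeDatum (nb 𝒞 par ψ b) (U.symm v)) := by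
  refine Prod.ext (funext fun i => ?_) ?_ <;>
    simp only [ePlus, plusVec, gaugeDatum, LinearMap.coe_mk, AddHom.coe_mk]
  · split_ifs with hzero hneg
    · simp
    · simp
    · rw [abs_of_nonneg (not_lt.1 hneg)]
      exact (neg_div_self hzero).symm
  · simp

namespace KeyRep

theorem adjoint_par_eq_neg (K : KeyRep 𝒞 (Set.range q) par j U f d g u eu w)
    (hG : GaussGreen 𝒞 par j U q ψ b)
    (hj : Dense (j '' {φ : 𝒞 | Vanish 𝒞 (Set.range q) φ})) :
    eu = -(-d - U.symm (par g)) := by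
  obtain ⟨hd, heu, hw, rfl, -⟩ := K
  refine heu.unique (fun φ hφ => ?_) hj
  have hsum := hG.inner_par_add_inner hw g u d φ
  simp only [vanish_range_iff.1 hφ, mul_zero, zero_mul, Finset.sum_const_zero, zero_add,
    hd φ hφ, inner_neg_left d, add_neg_cancel] at hsum
  rw [inner_neg_left]
  linarith

theorem nfb_eq (K : KeyRep 𝒞 (Set.range q) par j U f d g u eu w)
    (hG : GaussGreen 𝒞 par j U q ψ b) (hψ : IsBoundaryPartition 𝒞 q ψ)
    (hj : Dense (j '' {φ : 𝒞 | Vanish 𝒞 (Set.range q) φ})) (i : ι) :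
    nfb 𝒞 par j U ψ f d i =
      (g : C(X, ℝ)) (q i) * nb 𝒞 par ψ b i + duB 𝒞 par j ψ u eu i := by
  have heu := K.adjoint_par_eq_neg hG hj
  obtain ⟨-, -, hw, rfl, -⟩ := K
  have hsum : ∑ k, (g : C(X, ℝ)) (q k) * (ψ i : C(X, ℝ)) (q k) * nb 𝒞 par ψ b k =
      (g : C(X, ℝ)) (q i) * nb 𝒞 par ψ b i := by
    rw [← hψ.sum_apply_mul (fun k => (g : C(X, ℝ)) (q k) * nb 𝒞 par ψ b k) i]
    exact Finset.sum_congr rfl fun k _ => by ring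
  rw [nfb, hG.inner_par_add_inner hw, hsum, duB, heu, inner_neg_left]
  ring

theorem inner_par_add_inner (K : KeyRep 𝒞 (Set.range q) par j U f d g u eu w)
    (hG : GaussGreen 𝒞 par j U q ψ b) (hψ : IsBoundaryPartition 𝒞 q ψ)
    (hj : Dense (j '' {φ : 𝒞 | Vanish 𝒞 (Set.range q) φ})) (φ : 𝒞) :
    ⟪par u, par φ⟫ + ⟪-d - U.symm (par g), j φ⟫ =
      ∑ i, (φ : C(X, ℝ)) (q i) * duB 𝒞 par j ψ u eu i := by
  refine Eq.trans ?_ (K.2.1.inner_sub_inner hψ φ)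
  rw [K.adjoint_par_eq_neg hG hj, inner_neg_left, sub_neg_eq_add]

theorem crossForm_keyDatum_gaugeDatum (K : KeyRep 𝒞 (Set.range q) par j U f d g u eu w)
    (hG : GaussGreen 𝒞 par j U q ψ b) (hψ : IsBoundaryPartition 𝒞 q ψ)
    (hj : Dense (j '' {φ : 𝒞 | Vanish 𝒞 (Set.range q) φ}))
    (hpar : par 1 = 0) (hU : U (j 1) = b) {h : 𝒞} {v : H} (hb : b = par h + v) :
    crossForm (nb 𝒞 par ψ b) (keyDatum 𝒞 par j U q ψ d g u eu w)
      (gaugeDatum (nb 𝒞 par ψ b) (U.symm v)) = 0 := by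
  have hflux := K.inner_par_add_inner hG hψ hj 1
  obtain ⟨-, -, -, -, hz⟩ := K
  rw [hpar, inner_zero_right, zero_add, hz.inner_map_one hU hb] at hflux
  rw [keyDatum, crossForm_gaugeDatum, hflux, sub_eq_zero]
  exact Finset.sum_congr rfl fun i _ => (one_mul _).symm

theorem inner_adjoint_left {B : Set X} {f' d' : H₀} {g' u' : 𝒞} {eu' w' : H₀}
    (K : KeyRep 𝒞 B par j U f d g u eu w)
    (K' : KeyRep 𝒞 B par j U f' d' g' u' eu' w') :
    ⟪-d, f'⟫ = ⟪-d - U.symm (par g), j g'⟫ + ⟪-d - U.symm (par g), w'⟫ +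
      ⟪U (j g'), par g⟫ + ⟪par u', par g⟫ := by
  obtain ⟨-, -, -, -, hz⟩ := K
  obtain ⟨-, -, hw', rfl, -⟩ := K'
  have hzu : ⟪-d - U.symm (par g), U.symm (par u')⟫ = 0 := by
    rw [← U.inner_map_eq_flip, hz u']
  have hgf : ⟪U.symm (par g), j g' + U.symm (par u') + w'⟫ =
      ⟪U (j g'), par g⟫ + ⟪par u', par g⟫ := by
    rw [real_inner_comm, ← U.inner_map_eq_flip, map_add, map_add, U.apply_symm_apply,
      inner_add_left, inner_add_left, hw' g, add_zero]
  calc ⟪-d, j g' + U.symm (par u') + w'⟫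
      = ⟪-d - U.symm (par g), j g' + U.symm (par u') + w'⟫ +
          ⟪U.symm (par g), j g' + U.symm (par u') + w'⟫ := by
        rw [← inner_add_left, sub_add_cancel]
    _ = _ := by
        rw [hgf, inner_add_right, inner_add_right, hzu]
        ring

theorem inner_adjoint_add_inner_adjoint {f' d' : H₀} {g' u' : 𝒞} {eu' w' : H₀}
    (K : KeyRep 𝒞 (Set.range q) par j U f d g u eu w)
    (K' : KeyRep 𝒞 (Set.range q) par j U f' d' g' u' eu' w')
    (hG : GaussGreen 𝒞 par j U q ψ b) (hψ : IsBoundaryPartition 𝒞 q ψ)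
    (hj : Dense (j '' {φ : 𝒞 | Vanish 𝒞 (Set.range q) φ})) :
    ⟪-d, f'⟫ + ⟪f, -d'⟫ =
      crossForm (nb 𝒞 par ψ b) (keyDatum 𝒞 par j U q ψ d g u eu w)
        (keyDatum 𝒞 par j U q ψ d' g' u' eu' w') := by
  have hu := K.inner_par_add_inner hG hψ hj g'
  have hu' := K'.inner_par_add_inner hG hψ hj g
  have hgg' := hG g g'
  rw [real_inner_comm (-d') f, K.inner_adjoint_left K', K'.inner_adjoint_left K]
  simp only [crossForm, keyDatum, Finset.sum_add_distrib]
  rw [← hu, ← hu', ← hgg', real_inner_comm w]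
  ring

theorem Gminus_eq (K : KeyRep 𝒞 (Set.range q) par j U f d g u eu w)
    (hG : GaussGreen 𝒞 par j U q ψ b) (hψ : IsBoundaryPartition 𝒞 q ψ)
    (hj : Dense (j '' {φ : 𝒞 | Vanish 𝒞 (Set.range q) φ})) (v : H) :
    Gminus 𝒞 par j U q ψ b v f d g u eu w =
      minusTrace (nb 𝒞 par ψ b) (U.symm v) (keyDatum 𝒞 par j U q ψ d g u eu w) := by
  simp only [Gminus, K.nfb_eq hG hψ hj, eMinus_eq]
  rfl

theorem Gplus_eq (K : KeyRep 𝒞 (Set.range q) par j U f d g u eu w)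
    (hG : GaussGreen 𝒞 par j U q ψ b) (hψ : IsBoundaryPartition 𝒞 q ψ)
    (hj : Dense (j '' {φ : 𝒞 | Vanish 𝒞 (Set.range q) φ})) (v : H) :
    Gplus 𝒞 par j U q ψ b v f d g u eu w =
      plusTrace (nb 𝒞 par ψ b) (U.symm v) (keyDatum 𝒞 par j U q ψ d g u eu w) := by
  simp only [Gplus, K.nfb_eq hG hψ hj, ePlus_eq]
  rfl

theorem par_eq_par {B : Set X} {g' u' : 𝒞} {eu' w' : H₀}
    (K : KeyRep 𝒞 B par j U f d g u eu w) (K' : KeyRep 𝒞 B par j U f d g' u' eu' w') :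
    par g = par g' := by
  obtain ⟨-, -, -, -, hz⟩ := K
  obtain ⟨-, -, -, -, hz'⟩ := K'
  rw [← sub_eq_zero, ← inner_self_eq_zero (𝕜 := ℝ), ← map_sub]
  calc ⟪par (g - g'), par (g - g')⟫
      = ⟪U (-d - U.symm (par g')), par (g - g')⟫ - ⟪U (-d - U.symm (par g)), par (g - g')⟫ := by
        rw [← inner_sub_left, ← map_sub, sub_sub_sub_cancel_left, ← map_sub, ← map_sub,
          U.apply_symm_apply]
    _ = 0 := by rw [hz, hz', sub_zero]

theorem kernelPart_eq {B : Set X} {d' : H₀} {g' u' : 𝒞} {eu' w' : H₀} {c : ℝ}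
    (K : KeyRep 𝒞 B par j U f d g u eu w) (K' : KeyRep 𝒞 B par j U f d' g' u' eu' w')
    (hg : ∀ x, (g : C(X, ℝ)) x = (g' : C(X, ℝ)) x + c)
    (hU : U (j 1) = b) {h : 𝒞} {v : H} (hb : b = par h + v) (hv : ∀ φ : 𝒞, ⟪v, par φ⟫ = 0) :
    w = w' + c • -U.symm v := by
  obtain ⟨-, -, hw, hf, -⟩ := K
  obtain ⟨-, -, hw', hf', -⟩ := K'
  have hgg' : g = g' + c • (1 : 𝒞) := Subtype.ext (ContinuousMap.ext fun x => by simp [hg])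
  set k := par (u - u' + c • h) with hk
  set m := U (w - w' + c • U.symm v) with hm
  have hsum : k + m = 0 := by
    have hrep : U (j g + U.symm (par u) + w) - U (j g' + U.symm (par u') + w') = 0 := by
      rw [← hf, ← hf', sub_self]
    rw [hgg'] at hrep
    simp only [map_add, map_smul, hU, hb, U.apply_symm_apply] at hrep
    rw [← hrep, hk, hm]
    simp only [map_add, map_sub, map_smul, U.apply_symm_apply]
    module
  have hm_orth : ⟪m, k⟫ = 0 := by
    rw [hm, hk, map_add, map_sub, map_smul, U.apply_symm_apply, inner_add_left, inner_sub_left,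
      real_inner_smul_left, hw, hw', hv, mul_zero, sub_zero, add_zero]
  have hm_zero : m = 0 := by
    refine (inner_self_eq_zero (𝕜 := ℝ)).1 ?_
    calc ⟪m, m⟫ = ⟪m, k + m⟫ := by rw [inner_add_right, hm_orth, zero_add]
      _ = 0 := by rw [hsum, inner_zero_right]
  have hw_zero := U.map_eq_zero_iff.1 hm_zero
  rw [smul_neg, ← sub_eq_add_neg, eq_sub_iff_add_eq, ← sub_eq_zero, ← hw_zero]
  abel

theorem exists_keyDatum_eq_add_smul_gaugeDatum {d' : H₀} {g' u' : 𝒞} {eu' w' : H₀}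
    (K : KeyRep 𝒞 (Set.range q) par j U f d g u eu w)
    (K' : KeyRep 𝒞 (Set.range q) par j U f d' g' u' eu' w')
    (hG : GaussGreen 𝒞 par j U q ψ b) (hψ : IsBoundaryPartition 𝒞 q ψ)
    (hj : Dense (j '' {φ : 𝒞 | Vanish 𝒞 (Set.range q) φ}))
    (hconst : ∀ φ : 𝒞, par φ = 0 → ∃ c : ℝ, ∀ x, (φ : C(X, ℝ)) x = c)
    (hU : U (j 1) = b) {h : 𝒞} {v : H} (hb : b = par h + v) (hv : ∀ φ : 𝒞, ⟪v, par φ⟫ = 0) :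
    ∃ c : ℝ, keyDatum 𝒞 par j U q ψ d g u eu w =
      keyDatum 𝒞 par j U q ψ d' g' u' eu' w' +
        c • gaugeDatum (nb 𝒞 par ψ b) (U.symm v) := by
  obtain rfl : d = d' := K.1.unique K'.1 hj
  have hgg' := K.par_eq_par K'
  obtain ⟨c, hc⟩ := hconst (g - g') (by rw [map_sub, hgg', sub_self])
  have hg (x : X) : (g : C(X, ℝ)) x = (g' : C(X, ℝ)) x + c := eq_add_of_sub_eq' (hc x)
  have hδ (i : ι) : duB 𝒞 par j ψ u eu i = duB 𝒞 par j ψ u' eu' i - c * nb 𝒞 par ψ b i := by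
    have := (K.nfb_eq hG hψ hj i).symm.trans (K'.nfb_eq hG hψ hj i)
    rw [hg] at this
    linarith
  have hw := K.kernelPart_eq K' hg hU hb hv
  refine ⟨c, Prod.ext (funext fun i => ?_) (Prod.ext (funext fun i => ?_) (Prod.ext ?_ ?_))⟩
  · simp [keyDatum, gaugeDatum, hg]
  · simp [keyDatum, gaugeDatum, hδ, sub_eq_add_neg]
  · simpa [keyDatum, gaugeDatum] using hw
  · simp [keyDatum, gaugeDatum, hgg']

end KeyRep

theorem exists_keyRep_keyDatum_eq (hG : GaussGreen 𝒞 par j U q ψ b)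
    (hψ : IsBoundaryPartition 𝒞 q ψ) {γ δ : ι → ℝ} {w z : H₀} (hw : KerDperp 𝒞 par U w)
    (hz : KerDperp 𝒞 par U z)
    (hu : ∃ u : 𝒞, ∀ φ : 𝒞, ⟪par u, par φ⟫ = ∑ i, (φ : C(X, ℝ)) (q i) * δ i - ⟪z, j φ⟫) :
    ∃ (f d : H₀) (g u : 𝒞) (eu : H₀), KeyRep 𝒞 (Set.range q) par j U f d g u eu w ∧
      keyDatum 𝒞 par j U q ψ d g u eu w = (γ, δ, w, z) := by
  obtain ⟨u, hu⟩ := hu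
  set g : 𝒞 := ∑ i, γ i • ψ i
  have hzd : -(-z - U.symm (par g)) - U.symm (par g) = z := by abel
  have hadj : AdjRel 𝒞 (Set.range q) par j (par u) (-z) := fun φ hφ => by
    simp [hu, vanish_range_iff.1 hφ]
  refine ⟨j g + U.symm (par u) + w, -z - U.symm (par g), g, u, -z,
    ⟨fun φ hφ => ?_, hadj, hw, rfl, hzd.symm ▸ hz⟩,
    Prod.ext (funext fun i => hψ.sum_smul_apply γ i)
      (Prod.ext (funext fun i => ?_) (Prod.ext rfl hzd))⟩
  · have hsum := hG.inner_par_add_inner hw g u (-z - U.symm (par g)) φ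
    simp only [vanish_range_iff.1 hφ, mul_zero, zero_mul, Finset.sum_const_zero, zero_add,
      hzd, hadj φ hφ, inner_neg_left, neg_add_cancel] at hsum
    linarith
  · change ⟪par u, par (ψ i)⟫ - ⟪-z, j (ψ i)⟫ = δ i
    rw [hu, hψ.sum_apply_mul, inner_neg_left]
    ring

end KeyRepresentation

section BoundaryQuadruple

omit [CompleteSpace H] [CompleteSpace H₀]

variable {𝒞 : Subalgebra ℝ C(X, ℝ)} {q : ι → X}

omit [CompactSpace X] in
theorem par_one_eq_zero {act : 𝒞 →ₗ[ℝ] H →ₗ[ℝ] H} {par : 𝒞 →ₗ[ℝ] H}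
    (hact_one : ∀ p : H, act 1 p = p)
    (hpar : ∀ f g : 𝒞, par (f * g) = act f (par g) + act g (par f)) : par 1 = 0 := by
  simpa only [mul_one, hact_one, left_eq_add] using hpar 1 1

variable (𝒞 q) in
/-- Integration over the boundary points `q i` against the flux `δ`. -/
def boundaryFunctional (δ : ι → ℝ) : 𝒞 →ₗ[ℝ] ℝ where
  toFun φ := ∑ i, (φ : C(X, ℝ)) (q i) * δ i
  map_add' φ χ := by simp [add_mul, Finset.sum_add_distrib]
  map_smul' c φ := by simp [Finset.mul_sum, mul_assoc]

omit [CompactSpace X] in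
theorem boundaryFunctional_apply (δ : ι → ℝ) (φ : 𝒞) :
    boundaryFunctional 𝒞 q δ φ = ∑ i, (φ : C(X, ℝ)) (q i) * δ i :=
  rfl

theorem abs_boundaryFunctional_le (δ : ι → ℝ) (φ : 𝒞) :
    |boundaryFunctional 𝒞 q δ φ| ≤ (∑ i, |δ i|) * ‖(φ : C(X, ℝ))‖ := by
  rw [boundaryFunctional_apply, Finset.sum_mul]
  refine (Finset.abs_sum_le_sum_abs _ _).trans (Finset.sum_le_sum fun i _ => ?_)
  rw [abs_mul, mul_comm]
  exact mul_le_mul_of_nonneg_left ((φ : C(X, ℝ)).norm_coe_le_norm (q i)) (abs_nonneg _)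

theorem exists_neumann_solution_of_flux {par : 𝒞 →ₗ[ℝ] H} {j : 𝒞 →ₗ[ℝ] H₀}
    (hNeumann : ∀ (z : H₀) (F : 𝒞 →ₗ[ℝ] ℝ),
      (∀ φ : 𝒞, Vanish 𝒞 (Set.range q) φ → F φ = 0) →
      (∃ C : ℝ, ∀ f : 𝒞, |F f| ≤ C * (‖par f‖ + ‖(f : C(X, ℝ))‖)) →
      F 1 = ⟪z, j 1⟫ → ∃ u : 𝒞, ∀ φ : 𝒞, ⟪par u, par φ⟫ = F φ - ⟪z, j φ⟫)
    (z : H₀) (δ : ι → ℝ) (hδ : ∑ i, δ i = ⟪z, j 1⟫) :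
    ∃ u : 𝒞, ∀ φ : 𝒞, ⟪par u, par φ⟫ = ∑ i, (φ : C(X, ℝ)) (q i) * δ i - ⟪z, j φ⟫ := by
  refine hNeumann z (boundaryFunctional 𝒞 q δ) (fun φ hφ => ?_)
    ⟨∑ i, |δ i|, fun φ => (abs_boundaryFunctional_le δ φ).trans ?_⟩ ?_
  · simp [boundaryFunctional_apply, vanish_range_iff.1 hφ]
  · gcongr
    exact le_add_of_nonneg_left (norm_nonneg _)
  · simpa [boundaryFunctional_apply] using hδ

omit [CompactSpace X]

variable {ψ : ι → 𝒞} {par : 𝒞 →ₗ[ℝ] H} {j : 𝒞 →ₗ[ℝ] H₀} {U : H₀ ≃ₗᵢ[ℝ] H} {b : H}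

theorem exists_keyRep_minusTrace_eq_plusTrace_eq (hG : GaussGreen 𝒞 par j U q ψ b)
    (hψ : IsBoundaryPartition 𝒞 q ψ) (hU : U (j 1) = b) {h : 𝒞} {v : H} (hb : b = par h + v)
    (hNeumann : ∀ (z : H₀) (δ : ι → ℝ), ∑ i, δ i = ⟪z, j 1⟫ →
      ∃ u : 𝒞, ∀ φ : 𝒞, ⟪par u, par φ⟫ = ∑ i, (φ : C(X, ℝ)) (q i) * δ i - ⟪z, j φ⟫)
    {y y' : (ι → ℝ) × H₀} (hy : KerDperp 𝒞 par U y.2)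
    (hye : ipW 𝒞 par ψ b y (eMinus 𝒞 par ψ b U v) = 0) (hy' : KerDperp 𝒞 par U y'.2)
    (hye' : ipW 𝒞 par ψ b y' (ePlus 𝒞 par ψ b U v) = 0) :
    ∃ (f d : H₀) (g u : 𝒞) (eu w : H₀), KeyRep 𝒞 (Set.range q) par j U f d g u eu w ∧
      minusTrace (nb 𝒞 par ψ b) (U.symm v) (keyDatum 𝒞 par j U q ψ d g u eu w) = y ∧
      plusTrace (nb 𝒞 par ψ b) (U.symm v) (keyDatum 𝒞 par j U q ψ d g u eu w) = y' := by
  set n := nb 𝒞 par ψ b with hn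
  set D := datumOfVecs n y y' with hD
  have hw : KerDperp 𝒞 par U D.2.2.1 := fun φ => by
    simp [hD, datumOfVecs, inner_add_left, real_inner_smul_left, hy φ, hy' φ]
  have hz : KerDperp 𝒞 par U D.2.2.2 := fun φ => by
    simp [hD, datumOfVecs, inner_sub_left, real_inner_smul_left, hy φ, hy' φ]
  have horth : boundaryForm n y (minusVec n (gaugeDatum n (U.symm v))) = 0 := by
    rw [hn, ← eMinus_eq]
    exact hye
  have horth' : boundaryForm n y' (plusVec n (gaugeDatum n (U.symm v))) = 0 := by
    rw [hn, ← ePlus_eq]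
    exact hye'
  have hflux : ∑ i, D.2.1 i = ⟪D.2.2.2, j 1⟫ := by
    rw [hz.inner_map_one hU hb, ← sub_eq_zero, ← crossForm_gaugeDatum (n := n) _ D.1 _ D.2.2.1,
      ← boundaryForm_minusVec_sub_boundaryForm_plusVec, hD, minusVec_datumOfVecs,
      plusVec_datumOfVecs, horth, horth', sub_zero]
  obtain ⟨f, d, g, u, eu, K, hK⟩ :=
    exists_keyRep_keyDatum_eq (γ := D.1) hG hψ hw hz (hNeumann _ _ hflux)
  replace hK : keyDatum 𝒞 par j U q ψ d g u eu D.2.2.1 = D := hK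
  refine ⟨f, d, g, u, eu, D.2.2.1, K, ?_, ?_⟩
  · rw [hK, minusTrace, hD, minusVec_datumOfVecs]
    exact projWith_eq_self _ horth
  · rw [hK, plusTrace, hD, plusVec_datumOfVecs]
    exact projWith_eq_self _ horth'

end BoundaryQuadruple

omit [CompactSpace X] [CompleteSpace H] [CompleteSpace H₀] in
theorem stmt_13_general
    (𝒞 : Subalgebra ℝ C(X, ℝ))
    (act : 𝒞 →ₗ[ℝ] H →ₗ[ℝ] H)
    (hact_one : ∀ v : H, act 1 v = v)
    (hact_symm : ∀ (f : 𝒞) (v w : H), ⟪act f v, w⟫ = ⟪v, act f w⟫)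
    (par : 𝒞 →ₗ[ℝ] H)
    (hLeibniz : ∀ f g : 𝒞, par (f * g) = act f (par g) + act g (par f))
    (q : ι → X) (ψ : ι → 𝒞) (hψ : IsBoundaryPartition 𝒞 q ψ)
    (b : H) (hdivfree : ∀ φ : 𝒞, Vanish 𝒞 (Set.range q) φ → ⟪b, par φ⟫ = 0)
    (j : 𝒞 →ₗ[ℝ] H₀) (hjdense : Dense (j '' {f : 𝒞 | Vanish 𝒞 (Set.range q) f}))
    (U : H₀ ≃ₗᵢ[ℝ] H) (hU : ∀ f : 𝒞, U (j f) = act f b)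
    (hconst : ∀ f : 𝒞, par f = 0 → ∃ cst : ℝ, ∀ x : X, (f : C(X, ℝ)) x = cst)
    (hNeumann : ∀ (z : H₀) (δ : ι → ℝ), ∑ i, δ i = ⟪z, j 1⟫ →
      ∃ u : 𝒞, ∀ φ : 𝒞, ⟪par u, par φ⟫ = ∑ i, (φ : C(X, ℝ)) (q i) * δ i - ⟪z, j φ⟫)
    (h : 𝒞) (v : H) (hHodge : b = par h + v) (hv : ∀ φ : 𝒞, ⟪v, par φ⟫ = 0) :
    (∀ (f d d' : H₀) (g u : 𝒞) (eu w : H₀) (g' u' : 𝒞) (eu' w' : H₀),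
      KeyRep 𝒞 (Set.range q) par j U f d g u eu w →
      KeyRep 𝒞 (Set.range q) par j U f d' g' u' eu' w' →
      Gminus 𝒞 par j U q ψ b v f d g u eu w = Gminus 𝒞 par j U q ψ b v f d' g' u' eu' w' ∧
      Gplus 𝒞 par j U q ψ b v f d g u eu w = Gplus 𝒞 par j U q ψ b v f d' g' u' eu' w') ∧
    (∀ (f₁ f₂ d₁ d₂ : H₀) (g₁ u₁ : 𝒞) (eu₁ w₁ : H₀) (g₂ u₂ : 𝒞) (eu₂ w₂ : H₀),
      KeyRep 𝒞 (Set.range q) par j U f₁ d₁ g₁ u₁ eu₁ w₁ →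
      KeyRep 𝒞 (Set.range q) par j U f₂ d₂ g₂ u₂ eu₂ w₂ →
      ⟪-d₁, f₂⟫ + ⟪f₁, -d₂⟫ =
        ipW 𝒞 par ψ b (Gminus 𝒞 par j U q ψ b v f₁ d₁ g₁ u₁ eu₁ w₁)
          (Gminus 𝒞 par j U q ψ b v f₂ d₂ g₂ u₂ eu₂ w₂) -
        ipW 𝒞 par ψ b (Gplus 𝒞 par j U q ψ b v f₁ d₁ g₁ u₁ eu₁ w₁)
          (Gplus 𝒞 par j U q ψ b v f₂ d₂ g₂ u₂ eu₂ w₂)) ∧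
    (∀ y₁ y₂ : (ι → ℝ) × H₀,
      KerDperp 𝒞 par U y₁.2 → ipW 𝒞 par ψ b y₁ (eMinus 𝒞 par ψ b U v) = 0 →
      KerDperp 𝒞 par U y₂.2 → ipW 𝒞 par ψ b y₂ (ePlus 𝒞 par ψ b U v) = 0 →
      ∃ (f d : H₀) (g u : 𝒞) (eu w : H₀), KeyRep 𝒞 (Set.range q) par j U f d g u eu w ∧
        Gminus 𝒞 par j U q ψ b v f d g u eu w = y₁ ∧
        Gplus 𝒞 par j U q ψ b v f d g u eu w = y₂) := by
  have hG : GaussGreen 𝒞 par j U q ψ b := gaussGreen_of_leibniz hact_symm hLeibniz hU hψ hdivfree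
  have hpar : par 1 = 0 := par_one_eq_zero hact_one hLeibniz
  have hU1 : U (j 1) = b := (hU 1).trans (hact_one b)
  refine ⟨fun f d d' g u eu w g' u' eu' w' K K' => ?_,
    fun f₁ f₂ d₁ d₂ g₁ u₁ eu₁ w₁ g₂ u₂ eu₂ w₂ K₁ K₂ => ?_, fun y₁ y₂ hy₁ hye₁ hy₂ hye₂ => ?_⟩
  · obtain ⟨c, hc⟩ :=
      K.exists_keyDatum_eq_add_smul_gaugeDatum K' hG hψ hjdense hconst hU1 hHodge hv
    rw [K.Gminus_eq hG hψ hjdense, K'.Gminus_eq hG hψ hjdense, K.Gplus_eq hG hψ hjdense,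
      K'.Gplus_eq hG hψ hjdense, hc]
    exact ⟨minusTrace_add_smul_gaugeDatum _ _ c, plusTrace_add_smul_gaugeDatum _ _ c⟩
  · rw [K₁.inner_adjoint_add_inner_adjoint K₂ hG hψ hjdense, K₁.Gminus_eq hG hψ hjdense,
      K₂.Gminus_eq hG hψ hjdense, K₁.Gplus_eq hG hψ hjdense, K₂.Gplus_eq hG hψ hjdense]
    exact (boundaryForm_minusTrace_sub_boundaryForm_plusTrace
      (sum_nb_eq_zero hψ hdivfree hpar) (U.symm v)
      (K₁.crossForm_keyDatum_gaugeDatum hG hψ hjdense hpar hU1 hHodge)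
      (K₂.crossForm_keyDatum_gaugeDatum hG hψ hjdense hpar hU1 hHodge)).symm
  · obtain ⟨f, d, g, u, eu, w, K, hminus, hplus⟩ :=
      exists_keyRep_minusTrace_eq_plusTrace_eq hG hψ hU1 hHodge hNeumann hy₁ hye₁ hy₂ hye₂
    exact ⟨f, d, g, u, eu, w, K, (K.Gminus_eq hG hψ hjdense v).trans hminus,
      (K.Gplus_eq hG hψ hjdense v).trans hplus⟩

/-- **Boundary quadruple for divergence free fields** (Theorem `generalquadruple`):
`(H₋, H₊, G₋, G₊)` is a boundary quadruple for `j f ↦ −U⁻¹(∂f)` on `j(𝒞_B)`: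
(a) `G₋` and `G₊` do not depend on the chosen key representation, (b) they satisfy the
abstract integration by parts identity, and (c) `f ↦ (G₋f, G₊f)` is onto `H₋ × H₊`. -/
theorem stmt_13
    (𝒞 : Subalgebra ℝ C(X, ℝ))
    (act : 𝒞 →ₗ[ℝ] H →ₗ[ℝ] H)
    (hact_one : ∀ v : H, act 1 v = v)
    (hact_symm : ∀ (f : 𝒞) (v w : H), ⟪act f v, w⟫ = ⟪v, act f w⟫)
    (hact_bound : ∀ (f : 𝒞) (v : H), ‖act f v‖ ≤ ‖(f : C(X, ℝ))‖ * ‖v‖)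
    (par : 𝒞 →ₗ[ℝ] H)
    (hLeibniz : ∀ f g : 𝒞, par (f * g) = act f (par g) + act g (par f))
    (B : Set X) (hB : IsClosed B)
    (b : H) (hbne : b ≠ 0)
    (hdivfree : ∀ φ : 𝒞, Vanish 𝒞 B φ → ⟪b, par φ⟫ = 0)
    (j : 𝒞 →ₗ[ℝ] H₀) (hjinj : Function.Injective j)
    (hjdense : Dense (⇑j '' {f : 𝒞 | Vanish 𝒞 B f}))
    (U : H₀ ≃ₗᵢ[ℝ] H) (hU : ∀ f : 𝒞, U (j f) = act f b)
    -- resistance-space laws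
    (hconst : ∀ f : 𝒞, par f = 0 ↔ ∃ cst : ℝ, ∀ x : X, (f : C(X, ℝ)) x = cst)
    (hclosedrange : IsClosed ((LinearMap.range par : Submodule ℝ H) : Set H))
    (hNeumann : ∀ (z : H₀) (F : 𝒞 →ₗ[ℝ] ℝ),
      (∀ φ : 𝒞, Vanish 𝒞 B φ → F φ = 0) →
      (∃ C : ℝ, ∀ f : 𝒞, |F f| ≤ C * (‖par f‖ + ‖(f : C(X, ℝ))‖)) →
      F 1 = ⟪z, j 1⟫ →
      ∃ u : 𝒞, ∀ φ : 𝒞, ⟪par u, par φ⟫ = F φ - ⟪z, j φ⟫)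
    -- the Hodge decomposition `b = ∂h + v`
    (hh : 𝒞) (v : H) (hHodge : b = par hh + v) (hv : ∀ φ : 𝒞, ⟪v, par φ⟫ = 0)
    -- finite boundary data
    (q : ι → X) (hqinj : Function.Injective q) (hBq : B = Set.range q)
    (ψ : ι → 𝒞)
    (hψ1 : ∀ i, (ψ i : C(X, ℝ)) (q i) = 1)
    (hψ0 : ∀ i i', i ≠ i' → (ψ i : C(X, ℝ)) (q i') = 0)
    (hψharm : ∀ i, ∀ φ : 𝒞, Vanish 𝒞 B φ → ⟪par (ψ i), par φ⟫ = 0)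
    -- every element of `D(∂_B^⊥)` admits a key representation
    (hrep : ∀ f d : H₀, AdjRel 𝒞 B par j (U f) d →
      ∃ (g u : 𝒞) (eu w : H₀), KeyRep 𝒞 B par j U f d g u eu w) :
    -- (a) independence of the chosen key representation
    (∀ (f d d' : H₀) (g u : 𝒞) (eu w : H₀) (g' u' : 𝒞) (eu' w' : H₀),
      KeyRep 𝒞 B par j U f d g u eu w → KeyRep 𝒞 B par j U f d' g' u' eu' w' →
      Gminus 𝒞 par j U q ψ b v f d g u eu w = Gminus 𝒞 par j U q ψ b v f d' g' u' eu' w' ∧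
      Gplus 𝒞 par j U q ψ b v f d g u eu w = Gplus 𝒞 par j U q ψ b v f d' g' u' eu' w') ∧
    -- (b) the abstract integration by parts identity
    (∀ (f₁ f₂ d₁ d₂ : H₀) (g₁ u₁ : 𝒞) (eu₁ w₁ : H₀) (g₂ u₂ : 𝒞) (eu₂ w₂ : H₀),
      KeyRep 𝒞 B par j U f₁ d₁ g₁ u₁ eu₁ w₁ → KeyRep 𝒞 B par j U f₂ d₂ g₂ u₂ eu₂ w₂ →
      ⟪-d₁, f₂⟫ + ⟪f₁, -d₂⟫ =
        ipW 𝒞 par ψ b (Gminus 𝒞 par j U q ψ b v f₁ d₁ g₁ u₁ eu₁ w₁)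
          (Gminus 𝒞 par j U q ψ b v f₂ d₂ g₂ u₂ eu₂ w₂) -
        ipW 𝒞 par ψ b (Gplus 𝒞 par j U q ψ b v f₁ d₁ g₁ u₁ eu₁ w₁)
          (Gplus 𝒞 par j U q ψ b v f₂ d₂ g₂ u₂ eu₂ w₂)) ∧
    -- (c) surjectivity onto `H₋ × H₊`
    (∀ y₁ y₂ : (ι → ℝ) × H₀,
      KerDperp 𝒞 par U y₁.2 → ipW 𝒞 par ψ b y₁ (eMinus 𝒞 par ψ b U v) = 0 →
      KerDperp 𝒞 par U y₂.2 → ipW 𝒞 par ψ b y₂ (ePlus 𝒞 par ψ b U v) = 0 →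
      ∃ (f d : H₀) (g u : 𝒞) (eu w : H₀), KeyRep 𝒞 B par j U f d g u eu w ∧
        Gminus 𝒞 par j U q ψ b v f d g u eu w = y₁ ∧
        Gplus 𝒞 par j U q ψ b v f d g u eu w = y₂) := by
  subst hBq
  exact stmt_13_general 𝒞 act hact_one hact_symm par hLeibniz q ψ ⟨hψ1, hψ0⟩ b hdivfree j hjdense
    U hU (fun f => (hconst f).1) (exists_neumann_solution_of_flux hNeumann) hh v hHodge hv

end Stmt13
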